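/- There is an absolute constant c such that for every time t and every integer density class δ, P^δ(t)·W^δ(t) ≤ c·∑_{j∈A^δ(t)} (w_j·p_j + α_j⁺). -/

import Mathlib

/-! The jobs of `A^δ(t)` have densities in `[2^δ, 2^(δ+1))`, so `P·W ≤ 2·2^δ·P²`.  Expanding `P²` over
pairs of active jobs and charging each pair to the job `j` that arrives last, the earlier job `i` was
active at `r_j` with remaining size at least `p_i(t)`.  Such a pair contributes at least
`2^δ·p_j·p_i(r_j)` to `α_j⁺`, whichever of the two sums it falls into, because both densities are at
least `2^δ` (`alphaPlus_lower`); diagonal pairs are paid by `w_j·p_j ≥ 2^δ·p_j²`.  As `arrLE` is total,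
`P²` is at most twice the sum over ordered pairs (`sq_sum_le`), which gives `c = 4`. -/

open Finset
open scoped Classical

noncomputable section

namespace NPSched

/-- The density `ρ_j = w_j / p_j` of job `j`. -/
def den (p : ℕ → ℕ) (w : ℕ → ℝ) (j : ℕ) : ℝ := w j / p j

/-- The density class `⌊ρ_j⌋₂` of job `j`: the largest integer `i` with `2 ^ i ≤ ρ_j`. -/
def cls (p : ℕ → ℕ) (w : ℕ → ℝ) (j : ℕ) : ℤ := Int.log 2 (den p w j)

/-- Remaining size `p_j(t)` of job `j` at integer time `t` under schedule `sched`,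
where `sched t` is the job (if any) processed during the slot `[t, t+1]`. -/
def rem (p : ℕ → ℕ) (sched : ℕ → Option ℕ) (j t : ℕ) : ℕ :=
  p j - ((Finset.range t).filter fun t' => sched t' = some j).card

/-- Remaining weight `w_j(t) = ρ_j · p_j(t)`. -/
def wrem (p : ℕ → ℕ) (w : ℕ → ℝ) (sched : ℕ → Option ℕ) (j t : ℕ) : ℝ :=
  den p w j * rem p sched j t

/-- Fractional weighted flow time `∑_{t ≥ r_j} w_j(t)` of job `j`. -/
def fracFlow (r p : ℕ → ℕ) (w : ℕ → ℝ) (sched : ℕ → Option ℕ) (j : ℕ) : ℝ :=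
  ∑' t : ℕ, if r j ≤ t then wrem p w sched j t else 0

/-- `s` is the first time at which job `j` is ever processed. -/
def isStart (sched : ℕ → Option ℕ) (j s : ℕ) : Prop :=
  sched s = some j ∧ ∀ s' < s, sched s' ≠ some j

/-- Active jobs `A(t)`: released by `t`, not immediately rejected, not yet finished. -/
def activeAt (J : Finset ℕ) (r p : ℕ → ℕ) (sched : ℕ → Option ℕ) (Jimm : Finset ℕ)
    (t : ℕ) : Finset ℕ :=
  J.filter fun j => r j ≤ t ∧ j ∉ Jimm ∧ 0 < rem p sched j t

/-- The set `A(r_j)` of active jobs present when `j` arrives: jobs released strictly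
earlier, or simultaneously but earlier in the fixed (index) order, that are neither
rejected nor finished.  (`j` itself is excluded.) -/
def arrSet (J : Finset ℕ) (r p : ℕ → ℕ) (sched : ℕ → Option ℕ) (Jimm : Finset ℕ)
    (j : ℕ) : Finset ℕ :=
  J.filter fun j' =>
    (r j' < r j ∨ (r j' = r j ∧ j' < j)) ∧ j' ∉ Jimm ∧ 0 < rem p sched j' (r j)

/-- `α_j`: the increase of total fractional weighted flow time caused by the arrival
of `j`, had HDF been run on `A(r_j) ∪ {j}` from time `r_j` on. -/
def alpha (J : Finset ℕ) (r p : ℕ → ℕ) (w : ℕ → ℝ) (sched : ℕ → Option ℕ)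
    (Jimm : Finset ℕ) (j : ℕ) : ℝ :=
  w j * ∑ j' ∈ (arrSet J r p sched Jimm j).filter (fun j' => den p w j ≤ den p w j'),
      (rem p sched j' (r j) : ℝ)
    + w j * p j / 2
    + p j * ∑ j' ∈ (arrSet J r p sched Jimm j).filter (fun j' => den p w j' < den p w j),
        wrem p w sched j' (r j)

/-- `α_j⁺`: the part of (the two sums of) `α_j` coming from jobs of density class
at least `⌊ρ_j⌋₂`. -/
def alphaPlus (J : Finset ℕ) (r p : ℕ → ℕ) (w : ℕ → ℝ) (sched : ℕ → Option ℕ)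
    (Jimm : Finset ℕ) (j : ℕ) : ℝ :=
  w j * ∑ j' ∈ (arrSet J r p sched Jimm j).filter
      (fun j' => cls p w j ≤ cls p w j' ∧ den p w j ≤ den p w j'),
      (rem p sched j' (r j) : ℝ)
    + p j * ∑ j' ∈ (arrSet J r p sched Jimm j).filter
        (fun j' => cls p w j ≤ cls p w j' ∧ den p w j' < den p w j),
        wrem p w sched j' (r j)

/-- `α_j⁻`: the contribution to `α_j` of jobs of density class strictly less
than `⌊ρ_j⌋₂`. -/
def alphaMinus (J : Finset ℕ) (r p : ℕ → ℕ) (w : ℕ → ℝ) (sched : ℕ → Option ℕ)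
    (Jimm : Finset ℕ) (j : ℕ) : ℝ :=
  p j * ∑ j' ∈ (arrSet J r p sched Jimm j).filter (fun j' => cls p w j' < cls p w j),
      wrem p w sched j' (r j)

/-- The set `J⁺` of jobs assigned to table `T⁺`. -/
def Jplus (J : Finset ℕ) (r p : ℕ → ℕ) (w : ℕ → ℝ) (sched : ℕ → Option ℕ)
    (Jimm : Finset ℕ) (ε : ℝ) : Finset ℕ :=
  J.filter fun j => w j * p j / ε ≤ alphaPlus J r p w sched Jimm j

/-- The set `J⁻` of jobs assigned to table `T⁻`. -/
def Jminus (J : Finset ℕ) (r p : ℕ → ℕ) (w : ℕ → ℝ) (sched : ℕ → Option ℕ)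
    (Jimm : Finset ℕ) (ε : ℝ) : Finset ℕ :=
  J.filter fun j => w j * p j / ε < alphaMinus J r p w sched Jimm j

/-- The bucket `(⌊α_j⁺/w_j⌋₂, ⌊w_j⌋₂)` of table `T⁺` to which a job of `J⁺` is assigned. -/
def bucketPlus (J : Finset ℕ) (r p : ℕ → ℕ) (w : ℕ → ℝ) (sched : ℕ → Option ℕ)
    (Jimm : Finset ℕ) (j : ℕ) : ℤ × ℤ :=
  (Int.log 2 (alphaPlus J r p w sched Jimm j / w j), Int.log 2 (w j))

/-- The bucket `(⌊α_j⁻⌋₂, ⌊ρ_j⌋₂, ⌊p_j⌋₂)` of table `T⁻` to which a job of `J⁻` is assigned. -/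
def bucketMinus (J : Finset ℕ) (r p : ℕ → ℕ) (w : ℕ → ℝ) (sched : ℕ → Option ℕ)
    (Jimm : Finset ℕ) (j : ℕ) : ℤ × ℤ × ℤ :=
  (Int.log 2 (alphaMinus J r p w sched Jimm j), cls p w j, Int.log 2 ((p j : ℝ)))

/-- `j'` arrives no later than `j` (simultaneous arrivals ordered by index). -/
def arrLE (r : ℕ → ℕ) (j' j : ℕ) : Prop :=
  r j' < r j ∨ (r j' = r j ∧ j' ≤ j)

/-- The (1-based) position of `j` in the arrival order of its bucket of `T⁺`. -/
def rankPlus (J : Finset ℕ) (r p : ℕ → ℕ) (w : ℕ → ℝ) (sched : ℕ → Option ℕ)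
    (Jimm : Finset ℕ) (ε : ℝ) (j : ℕ) : ℕ :=
  ((Jplus J r p w sched Jimm ε).filter fun j' =>
    bucketPlus J r p w sched Jimm j' = bucketPlus J r p w sched Jimm j ∧ arrLE r j' j).card

/-- The (1-based) position of `j` in the arrival order of its bucket of `T⁻`. -/
def rankMinus (J : Finset ℕ) (r p : ℕ → ℕ) (w : ℕ → ℝ) (sched : ℕ → Option ℕ)
    (Jimm : Finset ℕ) (ε : ℝ) (j : ℕ) : ℕ :=
  ((Jminus J r p w sched Jimm ε).filter fun j' =>
    bucketMinus J r p w sched Jimm j' = bucketMinus J r p w sched Jimm j ∧ arrLE r j' j).card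

/-- An execution of algorithm `A` on a job instance `(J, r, p, w)` with parameter
`ε` (where `k = 1/ε` is a positive integer): the data consists of the schedule
(`sched t` is the job processed in slot `[t, t+1]`), the set `Jimm` of immediately
rejected jobs, and the growing set `L t` of preemptible jobs; the fields below
axiomatise exactly the rules of algorithm `A`. -/
structure AlgA where
  /-- the (finite) set of jobs -/
  J : Finset ℕ
  /-- release times -/
  r : ℕ → ℕ
  /-- sizes -/
  p : ℕ → ℕ
  /-- weights -/
  w : ℕ → ℝ
  /-- the parameter ε -/
  ε : ℝ
  /-- `k = 1/ε`, a positive integer -/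
  k : ℕ
  /-- the schedule produced by algorithm `A` -/
  sched : ℕ → Option ℕ
  /-- the set `J^imm` of immediately rejected jobs -/
  Jimm : Finset ℕ
  /-- `L t` : the set of preemptible jobs at time `t` -/
  L : ℕ → Finset ℕ
  hp : ∀ j ∈ J, 0 < p j
  hw : ∀ j ∈ J, 0 < w j
  hε : 0 < ε
  hε2 : ε ^ 2 ≤ 1 / 2
  hk : (k : ℝ) = 1 / ε
  /-- immediate rejections: in each bucket of `T⁺` the first job and every
  `(1/ε)`-th job thereafter (positions `1, 1 + k, 1 + 2k, …`), and in each bucket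
  of `T⁻` every `(1/ε)`-th job (positions `k, 2k, …`), are rejected on arrival. -/
  hJimm : ∀ j, j ∈ Jimm ↔ j ∈ J ∧
    ((j ∈ Jplus J r p w sched Jimm ε ∧ rankPlus J r p w sched Jimm ε j % k = 1 % k) ∨
     (j ∈ Jminus J r p w sched Jimm ε ∧ rankMinus J r p w sched Jimm ε j % k = 0))
  hL0 : L 0 = ∅
  /-- a job enters `L` when the weight released since it started processing
  exceeds `w_j / ε`; once in `L` it stays in `L`. -/
  hLsucc : ∀ t j, j ∈ L (t + 1) ↔ j ∈ L t ∨
    (sched t = some j ∧ ∃ s, isStart sched j s ∧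
      w j / ε < ∑ j' ∈ J.filter (fun j' => s < r j' ∧ r j' ≤ t + 1), w j')
  /-- only active jobs are processed -/
  hvalid : ∀ t j, sched t = some j → j ∈ activeAt J r p sched Jimm t
  /-- a running job that is unfinished and not preemptible keeps running -/
  hcont : ∀ t j, sched t = some j → 0 < rem p sched j (t + 1) → j ∉ L (t + 1) →
    sched (t + 1) = some j
  /-- initially, a highest-density active job is processed (if any job is active) -/
  hHDF0 : (activeAt J r p sched Jimm 0 = ∅ ∧ sched 0 = none) ∨
    ∃ j, sched 0 = some j ∧ ∀ j' ∈ activeAt J r p sched Jimm 0, den p w j' ≤ den p w j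
  /-- whenever the previous job has finished or become preemptible (or no job was
  running), a highest-density active job is processed (if any job is active) -/
  hHDFsucc : ∀ t, (∀ j, sched t = some j → rem p sched j (t + 1) = 0 ∨ j ∈ L (t + 1)) →
    (activeAt J r p sched Jimm (t + 1) = ∅ ∧ sched (t + 1) = none) ∨
    ∃ j, sched (t + 1) = some j ∧
      ∀ j' ∈ activeAt J r p sched Jimm (t + 1), den p w j' ≤ den p w j
  /-- every job that is not immediately rejected is eventually finished by `A` -/
  hdone : ∀ j ∈ J, j ∉ Jimm → ∃ T, rem p sched j T = 0



/-- `A^δ(t)`: the active jobs of density class `δ` at time `t`. -/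
def Ad (J : Finset ℕ) (r p : ℕ → ℕ) (w : ℕ → ℝ) (sched : ℕ → Option ℕ)
    (Jimm : Finset ℕ) (δ : ℤ) (t : ℕ) : Finset ℕ :=
  (activeAt J r p sched Jimm t).filter fun j => cls p w j = δ

/-- `P^δ(t)`: the total remaining size of the active class-`δ` jobs at time `t`. -/
def Pd (J : Finset ℕ) (r p : ℕ → ℕ) (w : ℕ → ℝ) (sched : ℕ → Option ℕ)
    (Jimm : Finset ℕ) (δ : ℤ) (t : ℕ) : ℝ :=
  ∑ j ∈ Ad J r p w sched Jimm δ t, (rem p sched j t : ℝ)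

/-- `W^δ(t)`: the total remaining weight of the active class-`δ` jobs at time `t`. -/
def Wd (J : Finset ℕ) (r p : ℕ → ℕ) (w : ℕ → ℝ) (sched : ℕ → Option ℕ)
    (Jimm : Finset ℕ) (δ : ℤ) (t : ℕ) : ℝ :=
  ∑ j ∈ Ad J r p w sched Jimm δ t, wrem p w sched j t

/-- `P^δ = max_t P^δ(t)`. -/
def Pmax (J : Finset ℕ) (r p : ℕ → ℕ) (w : ℕ → ℝ) (sched : ℕ → Option ℕ)
    (Jimm : Finset ℕ) (δ : ℤ) : ℝ :=
  ⨆ t : ℕ, Pd J r p w sched Jimm δ t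

/-- `W^δ = max_t W^δ(t)`. -/
def Wmax (J : Finset ℕ) (r p : ℕ → ℕ) (w : ℕ → ℝ) (sched : ℕ → Option ℕ)
    (Jimm : Finset ℕ) (δ : ℤ) : ℝ :=
  ⨆ t : ℕ, Wd J r p w sched Jimm δ t

theorem rem_antitone (p : ℕ → ℕ) (sched : ℕ → Option ℕ) (j : ℕ) {s t : ℕ} (h : s ≤ t) :
    rem p sched j t ≤ rem p sched j s := by
  unfold rem
  have : ((Finset.range s).filter fun t' => sched t' = some j).card ≤
      ((Finset.range t).filter fun t' => sched t' = some j).card :=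
    card_le_card (filter_subset_filter _ (range_subset_range.2 h))
  omega

theorem rem_le (p : ℕ → ℕ) (sched : ℕ → Option ℕ) (j t : ℕ) : rem p sched j t ≤ p j :=
  Nat.sub_le _ _

/-- Symmetrisation along a total relation: each unordered pair is counted at least once. -/
theorem sq_sum_le (S : Finset ℕ) (x : ℕ → ℝ) (hx : ∀ i ∈ S, 0 ≤ x i) (R : ℕ → ℕ → Prop)
    (hR : ∀ i j, R i j ∨ R j i) :
    (∑ i ∈ S, x i) * (∑ i ∈ S, x i) ≤ 2 * ∑ j ∈ S, x j * ∑ i ∈ S.filter (fun i => R i j), x i := by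
  have e1 : ∑ j ∈ S, x j * ∑ i ∈ S.filter (fun i => R i j), x i
      = ∑ j ∈ S, ∑ i ∈ S, if R i j then x j * x i else 0 := by
    refine sum_congr rfl fun j _ => ?_
    rw [mul_sum, sum_filter]
  have e2 : ∑ j ∈ S, x j * ∑ i ∈ S.filter (fun i => R i j), x i
      = ∑ j ∈ S, ∑ i ∈ S, if R j i then x i * x j else 0 := by
    rw [e1, sum_comm]
  rw [two_mul]
  nth_rewrite 1 [e1]
  rw [e2, ← sum_add_distrib, sum_mul_sum]
  refine sum_le_sum fun j hj => ?_
  rw [← sum_add_distrib]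
  refine sum_le_sum fun i hi => ?_
  have h0 := mul_nonneg (hx j hj) (hx i hi)
  rcases hR i j with h | h
  · rw [if_pos h]
    split_ifs <;> linarith [mul_comm (x j) (x i)]
  · rw [if_pos h]
    split_ifs <;> linarith [mul_comm (x j) (x i)]

/-- Earlier jobs of the same density class contribute to `α_j⁺` at least `2^δ·p_j` times their
remaining size: a denser job contributes `w_j·p_i(r_j)` with `w_j = ρ_j·p_j`, a less dense one
`p_j·ρ_i·p_i(r_j)`, and both densities are at least `m = 2^δ`. -/
theorem alphaPlus_lower (A : AlgA) {m : ℝ} {j : ℕ} (hj : j ∈ A.J) (hm : m ≤ den A.p A.w j)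
    (B : Finset ℕ) (hB : B ⊆ arrSet A.J A.r A.p A.sched A.Jimm j)
    (hc : ∀ i ∈ B, cls A.p A.w j ≤ cls A.p A.w i) (hmB : ∀ i ∈ B, m ≤ den A.p A.w i) :
    m * A.p j * ∑ i ∈ B, (rem A.p A.sched i (A.r j) : ℝ) ≤
      alphaPlus A.J A.r A.p A.w A.sched A.Jimm j := by
  have hpj : (0 : ℝ) < A.p j := by exact_mod_cast A.hp j hj
  have hwj : A.w j = den A.p A.w j * A.p j := by
    unfold den; field_simp
  have hw0 := A.hw j hj
  unfold alphaPlus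
  simp only [← filter_filter]
  have hsub : B ⊆ (arrSet A.J A.r A.p A.sched A.Jimm j).filter
      (fun i => cls A.p A.w j ≤ cls A.p A.w i) :=
    fun i hi => mem_filter.2 ⟨hB hi, hc i hi⟩
  set C := (arrSet A.J A.r A.p A.sched A.Jimm j).filter
      (fun i => cls A.p A.w j ≤ cls A.p A.w i) with hC
  have hCJ : ∀ i ∈ C, i ∈ A.J := fun i hi =>
    (mem_filter.1 (mem_filter.1 hi).1).1
  clear_value C
  rw [mul_sum, mul_sum, mul_sum, sum_filter, sum_filter, ← sum_add_distrib]
  have hden : ∀ i ∈ C, 0 ≤ den A.p A.w i := fun i hi =>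
    div_nonneg (A.hw i (hCJ i hi)).le (Nat.cast_nonneg _)
  refine le_trans (sum_le_sum fun i hi => ?_)
    (sum_le_sum_of_subset_of_nonneg hsub fun i hi _ => ?_)
  · have h0 : (0 : ℝ) ≤ rem A.p A.sched i (A.r j) := Nat.cast_nonneg _
    by_cases h : den A.p A.w j ≤ den A.p A.w i
    · rw [if_pos h, if_neg (not_lt.2 h), add_zero]
      rw [hwj]
      gcongr
    · rw [if_neg h, if_pos (not_le.1 h), zero_add]
      unfold wrem
      have : m * A.p j * rem A.p A.sched i (A.r j)
          ≤ den A.p A.w i * A.p j * rem A.p A.sched i (A.r j) := by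
        gcongr
        exact hmB i hi
      linarith
  · have := hden i hi
    unfold wrem
    split_ifs <;> positivity

/-- `P^δ(t)·W^δ(t) ≤ c·∑_{j∈A^δ(t)} (w_j·p_j + α_j⁺)` for an
absolute constant `c`, every time `t` and every integer density class `δ`. -/
theorem Pd_mul_Wd_le :
    ∃ c : ℝ, 0 < c ∧ ∀ A : AlgA, ∀ t : ℕ, ∀ δ : ℤ,
      Pd A.J A.r A.p A.w A.sched A.Jimm δ t * Wd A.J A.r A.p A.w A.sched A.Jimm δ t ≤
        c * ∑ j ∈ Ad A.J A.r A.p A.w A.sched A.Jimm δ t,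
          (A.w j * A.p j + alphaPlus A.J A.r A.p A.w A.sched A.Jimm j) := by
  refine ⟨4, by norm_num, fun A t δ => ?_⟩
  set S := Ad A.J A.r A.p A.w A.sched A.Jimm δ t with hS
  have hmem : ∀ j ∈ S, j ∈ A.J ∧ A.r j ≤ t ∧ j ∉ A.Jimm ∧ 0 < rem A.p A.sched j t ∧
      cls A.p A.w j = δ := fun j hj => by
    simpa [hS, Ad, activeAt, and_assoc] using hj
  have hdpos : ∀ j ∈ S, 0 < den A.p A.w j := fun j hj =>
    div_pos (A.hw j (hmem j hj).1) (by exact_mod_cast A.hp j (hmem j hj).1)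
  have hlow : ∀ j ∈ S, (2 : ℝ) ^ δ ≤ den A.p A.w j := fun j hj => by
    have := Int.zpow_log_le_self (b := 2) (by norm_num) (hdpos j hj)
    have e : Int.log 2 (den A.p A.w j) = δ := (hmem j hj).2.2.2.2
    rw [e] at this
    exact_mod_cast this
  have hup : ∀ j ∈ S, den A.p A.w j ≤ 2 * (2 : ℝ) ^ δ := fun j hj => by
    have := Int.lt_zpow_succ_log_self (b := 2) (by norm_num) (den A.p A.w j)
    have e : Int.log 2 (den A.p A.w j) = δ := (hmem j hj).2.2.2.2
    rw [e, zpow_add_one₀ (by norm_num)] at this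
    push_cast at this
    linarith
  have hm : (0 : ℝ) < 2 ^ δ := by positivity
  generalize (2 : ℝ) ^ δ = m at hlow hup hm
  have hP : Pd A.J A.r A.p A.w A.sched A.Jimm δ t = ∑ j ∈ S, (rem A.p A.sched j t : ℝ) := rfl
  have hW : Wd A.J A.r A.p A.w A.sched A.Jimm δ t ≤
      2 * m * ∑ j ∈ S, (rem A.p A.sched j t : ℝ) := by
    rw [mul_sum]
    refine sum_le_sum fun j hj => ?_
    unfold wrem
    have := hup j hj
    gcongr
  have hsq := sq_sum_le S (fun j => (rem A.p A.sched j t : ℝ)) (fun _ _ => Nat.cast_nonneg _)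
    (arrLE A.r) (fun i j => by unfold arrLE; omega)
  -- the charge received by the last arrival `j` of each pair
  have hch : ∀ j ∈ S, m * ((rem A.p A.sched j t : ℝ) *
      ∑ i ∈ S.filter (fun i => arrLE A.r i j), (rem A.p A.sched i t : ℝ)) ≤
      A.w j * A.p j + alphaPlus A.J A.r A.p A.w A.sched A.Jimm j := by
    intro j hj
    obtain ⟨hjJ, hjr, -, -, hjc⟩ := hmem j hj
    have hrj : (rem A.p A.sched j t : ℝ) ≤ A.p j := by exact_mod_cast rem_le _ _ _ _
    have hpj : (0 : ℝ) < A.p j := by exact_mod_cast A.hp j hjJ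
    have hwj : m * A.p j ≤ A.w j := by
      have := hlow j hj
      unfold den at this
      rwa [le_div_iff₀ hpj] at this
    set B := (S.filter (fun i => arrLE A.r i j)).erase j with hBdef
    have hBS : ∀ i ∈ B, i ∈ S := fun i hi => (mem_filter.1 (mem_erase.1 hi).2).1
    have hjF : j ∈ S.filter (fun i => arrLE A.r i j) :=
      mem_filter.2 ⟨hj, Or.inr ⟨rfl, le_rfl⟩⟩
    have hα := alphaPlus_lower A hjJ (hlow j hj) B
      (fun i hi => by
        obtain ⟨hiJ, -, hin, hipos, -⟩ := hmem i (hBS i hi)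
        have hne := (mem_erase.1 hi).1
        have hle : arrLE A.r i j := (mem_filter.1 (mem_erase.1 hi).2).2
        have := rem_antitone A.p A.sched i hjr
        refine mem_filter.2 ⟨hiJ, ?_, hin, by omega⟩
        unfold arrLE at hle
        omega)
      (fun i hi => by rw [hjc, (hmem i (hBS i hi)).2.2.2.2])
      (fun i hi => hlow i (hBS i hi))
    have hsum : ∑ i ∈ B, (rem A.p A.sched i t : ℝ) ≤
        ∑ i ∈ B, (rem A.p A.sched i (A.r j) : ℝ) :=
      sum_le_sum fun i _ => by exact_mod_cast rem_antitone _ _ _ hjr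
    rw [← add_sum_erase _ _ hjF, ← hBdef]
    have h1 : m * A.p j * A.p j ≤ A.w j * A.p j := by gcongr
    have h2 : m * ((rem A.p A.sched j t : ℝ) * rem A.p A.sched j t) ≤ m * (A.p j * A.p j) := by
      gcongr
    have h3 : m * ((rem A.p A.sched j t : ℝ) * ∑ i ∈ B, (rem A.p A.sched i t : ℝ)) ≤
        m * (A.p j * ∑ i ∈ B, (rem A.p A.sched i (A.r j) : ℝ)) := by
      gcongr
    linarith
  have htot := sum_le_sum hch
  rw [← mul_sum] at htot
  have hP0 : 0 ≤ ∑ j ∈ S, (rem A.p A.sched j t : ℝ) := sum_nonneg fun _ _ => Nat.cast_nonneg _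
  rw [hP]
  have k1 := mul_le_mul_of_nonneg_left hW hP0
  have k2 := mul_le_mul_of_nonneg_left hsq (by positivity : (0 : ℝ) ≤ 2 * m)
  linarith
end NPSched
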